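/- Assume condition (A1) holds with limit I ∈ (0,∞), and let α ↦ ϱ_α ∈ (0,1) satisfy ϱ_α → 0 as α → 0. Then for every fixed ν ≥ 0, liminf_{α→0} (1/|log α|)·inf_{τ∈Δ(α,ϱ_α)} R_ν(τ) ≥ 1/I and liminf_{α→0} (1/|log α|)·inf_{τ∈Δ(α,ϱ_α)} R*_ν(τ) ≥ 1/I; consequently the same lower bounds hold with R_ν(τ) replaced by sup_{ν≥0} R_ν(τ) and with R*_ν(τ) replaced by sup_{ν≥0} R*_ν(τ). -/

import Mathlib

/-! The lower bound comes from a change of measure at a single deterministic time. Membership in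
`Δ(α,ϱ)` forces `P_∞(τ ≤ l) ≤ α (1-ϱ)^{-l}` for every `l`, because `P_∞(τ ≤ k)` increases in `k` and
the geometric prior has tail mass `(1-ϱ)^l`. The event `{τ ≤ ν+N}` lies in `F (ν+N)`, so
`P_ν(τ ≤ ν+N) ≤ P_ν(Z_{ν+N}^ν > N J) + e^{N J} P_∞(τ ≤ ν+N)` for every `J`.

Fix `b < 1/I`, take `N = ⌊b |log α|⌋` and choose `J` with `I < J < 1/b`. As `α → 0` the first term
vanishes by (A1) since `J > I`, and the second one since `b J < 1` while
`(1-ϱ_α)^{-(ν+N)} = exp(o(|log α|))`. These bounds do not depend on `τ`, so by Markov's inequality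
`R_ν(τ) ≥ N P_ν(τ > ν+N) ≥ N (1-o(1)) ~ b |log α|` uniformly over the class; let `b → 1/I`.
The other risks dominate `R_ν` (for the suprema, `R_0`). -/

open MeasureTheory Filter Set Topology ENNReal

noncomputable section

/-- A general change-point model: a filtration `F` on `Ω`, probability measures `P k`
(the change occurs immediately after time `k`) and `Pinf` (no change), such that `P k`
and `Pinf` agree on `F n` for `n ≤ k` and are mutually absolutely continuous
on `F n` for `n > k`. -/
structure ChangePointModel (Ω : Type) [m0 : MeasurableSpace Ω] where
  F : ℕ → MeasurableSpace Ω
  F_le : ∀ n, F n ≤ m0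
  F_mono : Monotone F
  F_zero : F 0 = ⊥
  P : ℕ → Measure Ω
  Pinf : Measure Ω
  P_prob : ∀ k, IsProbabilityMeasure (P k)
  Pinf_prob : IsProbabilityMeasure Pinf
  agree : ∀ k n : ℕ, n ≤ k → (P k).trim (F_le n) = Pinf.trim (F_le n)
  ac₁ : ∀ k n : ℕ, k < n → (P k).trim (F_le n) ≪ Pinf.trim (F_le n)
  ac₂ : ∀ k n : ℕ, k < n → Pinf.trim (F_le n) ≪ (P k).trim (F_le n)

namespace ChangePointModel

variable {Ω : Type} [m0 : MeasurableSpace Ω] (M : ChangePointModel Ω)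

/-- The log-likelihood ratio `Z n k = log (d(P k|F n)/d(P∞|F n))`. -/
def Z (n k : ℕ) (ω : Ω) : ℝ :=
  Real.log ((((M.P k).trim (M.F_le n)).rnDeriv (M.Pinf.trim (M.F_le n))) ω).toReal

/-- A detection procedure: a stopping time of the filtration `F` with values in `{1,2,…,∞}`. -/
def IsDetection (τ : Ω → ℕ∞) : Prop :=
  (∀ ω, 1 ≤ τ ω) ∧ ∀ n : ℕ, MeasurableSet[M.F n] {ω | τ ω ≤ (n : ℕ∞)}

/-- The detection risk `R_ν(τ) = E_ν (τ - ν)⁺`. -/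
def risk (ν : ℕ) (τ : Ω → ℕ∞) : ℝ≥0∞ :=
  ∫⁻ ω, ((τ ω - (ν : ℕ∞) : ℕ∞) : ℝ≥0∞) ∂(M.P ν)

/-- The conditional detection risk `R*_ν(τ) = E_ν (τ - ν | τ > ν)`. -/
def crisk (ν : ℕ) (τ : Ω → ℕ∞) : ℝ≥0∞ :=
  M.risk ν τ / M.P ν {ω | (ν : ℕ∞) < τ ω}

/-- The moment-`ℓ` detection risk `E_ν ((τ - ν)⁺)^ℓ`. -/
def riskPow (ℓ : ℝ) (ν : ℕ) (τ : Ω → ℕ∞) : ℝ≥0∞ :=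
  ∫⁻ ω, ((τ ω - (ν : ℕ∞) : ℕ∞) : ℝ≥0∞) ^ ℓ ∂(M.P ν)

/-- The conditional moment-`ℓ` detection risk `E_ν ((τ - ν)^ℓ | τ > ν)`. -/
def criskPow (ℓ : ℝ) (ν : ℕ) (τ : Ω → ℕ∞) : ℝ≥0∞ :=
  M.riskPow ℓ ν τ / M.P ν {ω | (ν : ℕ∞) < τ ω}

/-- The Bayesian class `Δ(α,ϱ)` of detection procedures with weighted probability of
false alarm at most `α` (geometric prior with parameter `ϱ`). -/
def Delta (α ϱ : ℝ) : Set (Ω → ℕ∞) :=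
  {τ | M.IsDetection τ ∧
    ∑' k : ℕ, ENNReal.ofReal (ϱ * (1 - ϱ) ^ k) * M.Pinf {ω | τ ω ≤ (k : ℕ∞)}
      ≤ ENNReal.ofReal α}

/-- The Shiryaev–Roberts statistic `R_n = ∑_{k=1}^n exp (Z_n^{k-1})`. -/
def SRstat (n : ℕ) (ω : Ω) : ℝ :=
  ∑ k ∈ Finset.range n, Real.exp (M.Z n k ω)

/-- The Shiryaev–Roberts procedure with threshold `h`. -/
def SR (h : ℝ) (ω : Ω) : ℕ∞ :=
  sInf {n : ℕ∞ | ∃ m : ℕ, n = (m : ℕ∞) ∧ 1 ≤ m ∧ h ≤ M.SRstat m ω}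

/-- Condition (A1): `Z (k+n) k / n → I` almost surely under `P k`, for every `k`. -/
def CondA1 (I : ℝ) : Prop :=
  ∀ k : ℕ, ∀ᵐ ω ∂(M.P k),
    Tendsto (fun n : ℕ => M.Z (k + n) k ω / n) atTop (𝓝 I)

/-- Condition (A2): uniform complete convergence of `Z (k+n) k / n` to `I`. -/
def CondA2 (I : ℝ) : Prop :=
  ∀ ε : ℝ, 0 < ε →
    (∑' n : ℕ, ⨆ k : ℕ,
      M.P k {ω | ε < |M.Z (k + (n + 1)) k ω / (n + 1) - I|}) < ⊤

/-- Uniform `r`-complete convergence of `Z (k+n) k / n` to `I`. -/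
def CondAr (r I : ℝ) : Prop :=
  ∀ ε : ℝ, 0 < ε →
    (∑' n : ℕ, ENNReal.ofReal ((n + 1 : ℝ) ^ (r - 1)) * ⨆ k : ℕ,
      M.P k {ω | ε < |M.Z (k + (n + 1)) k ω / (n + 1) - I|}) < ⊤

/-- The class `H(β,k*,m*)` : local probability of a false alarm in windows of
length `m*` starting at `1 ≤ k ≤ k* - m*` is at most `β`. -/
def Hclass (β : ℝ) (kstar mstar : ℕ) : Set (Ω → ℕ∞) :=
  {τ | M.IsDetection τ ∧ ∀ k : ℕ, 1 ≤ k → k + mstar ≤ kstar →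
    M.Pinf {ω | (k : ℕ∞) ≤ τ ω ∧ τ ω < ((k + mstar : ℕ) : ℕ∞)} ≤ ENNReal.ofReal β}

/-- The class `H*(β,k*,m*)` : local conditional probability of a false alarm
`P_∞(τ < k+m* | τ > k)` is at most `β` for `1 ≤ k ≤ k* - m*`. -/
def HclassStar (β : ℝ) (kstar mstar : ℕ) : Set (Ω → ℕ∞) :=
  {τ | M.IsDetection τ ∧ ∀ k : ℕ, 1 ≤ k → k + mstar ≤ kstar →
    M.Pinf {ω | (k : ℕ∞) < τ ω ∧ τ ω < ((k + mstar : ℕ) : ℕ∞)}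
        / M.Pinf {ω | (k : ℕ∞) < τ ω} ≤ ENNReal.ofReal β}

end ChangePointModel

/-- `ϱ_{1,β} = 1/(1+|log β|)`. -/
def rho1 (β : ℝ) : ℝ := 1 / (1 + |Real.log β|)

/-- `ϱ_{2,β} = ϱ_{1,β}/(1+|log|log β||)`. -/
def rho2 (β : ℝ) : ℝ := rho1 β / (1 + |Real.log (|Real.log β|)|)

/-- `α₁(β,m*) = β + (1-ϱ_{1,β})^{m*+1}`. -/
def alpha1 (β : ℝ) (m : ℕ) : ℝ := β + (1 - rho1 β) ^ (m + 1)

/-- `α₂(β,k*) = β (1-ϱ_{2,β})^{k*}`. -/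
def alpha2 (β : ℝ) (k : ℕ) : ℝ := β * (1 - rho2 β) ^ k

/-- `α₃(β,k*) = β (1-ϱ_{2,β})^{k*} / (1+β)`. -/
def alpha3 (β : ℝ) (k : ℕ) : ℝ := β * (1 - rho2 β) ^ k / (1 + β)

section GeneralMeasure

variable {Ω : Type*} {m : MeasurableSpace Ω} {μ π : Measure Ω}

lemma rnDeriv_le_ofReal_exp_of_llr_le {ω : Ω} {a : ℝ} (hfin : μ.rnDeriv π ω ≠ ∞)
    (hle : llr μ π ω ≤ a) : μ.rnDeriv π ω ≤ ENNReal.ofReal (Real.exp a) := by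
  rw [← ENNReal.ofReal_toReal hfin]
  exact ENNReal.ofReal_le_ofReal (Real.le_exp_of_log_le hle)

lemma measure_le_measure_lt_llr_add [SigmaFinite μ] [SigmaFinite π] (hμπ : μ ≪ π) (A : Set Ω)
    (a : ℝ) : μ A ≤ μ {ω | a < llr μ π ω} + ENNReal.ofReal (Real.exp a) * π A := by
  set S := {ω | a < llr μ π ω}
  have density_le : ∀ᵐ ω ∂π, ω ∈ A \ S → μ.rnDeriv π ω ≤ ENNReal.ofReal (Real.exp a) := by
    filter_upwards [μ.rnDeriv_ne_top π] with ω hfin hω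
    exact rnDeriv_le_ofReal_exp_of_llr_le hfin (not_lt.mp hω.2)
  calc μ A ≤ μ (A ∩ S) + μ (A \ S) := measure_le_inter_add_sdiff μ A S
    _ ≤ μ S + ∫⁻ ω in A \ S, μ.rnDeriv π ω ∂π := by
        rw [Measure.setLIntegral_rnDeriv hμπ]
        gcongr
        exact inter_subset_right
    _ ≤ μ S + ∫⁻ _ in A \ S, ENNReal.ofReal (Real.exp a) ∂π := by
        gcongr 1
        exact setLIntegral_mono_ae aemeasurable_const density_le
    _ ≤ μ S + ENNReal.ofReal (Real.exp a) * π A := by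
        rw [setLIntegral_const]
        gcongr
        exact sdiff_subset

lemma tendsto_measure_lt_of_tendstoInMeasure_const {ι : Type*} {l : Filter ι} {X : ι → Ω → ℝ}
    {c J : ℝ} (hX : TendstoInMeasure μ X l fun _ => c) (hJ : c < J) :
    Tendsto (fun i => μ {ω | J < X i ω}) l (𝓝 0) := by
  have deviation := tendstoInMeasure_iff_dist.mp hX (J - c) (sub_pos.mpr hJ)
  refine tendsto_of_tendsto_of_tendsto_of_le_of_le tendsto_const_nhds deviation
    (fun _ => zero_le) fun i => measure_mono fun ω (hω : J < X i ω) => ?_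
  calc J - c ≤ X i ω - c := by linarith
    _ ≤ dist (X i ω) c := le_abs_self _

end GeneralMeasure

lemma hasSum_geometric_tail {ϱ : ℝ} (h0 : 0 < ϱ) (h1 : ϱ ≤ 1) (l : ℕ) :
    HasSum (fun k : ℕ => ϱ * (1 - ϱ) ^ (k + l)) ((1 - ϱ) ^ l) := by
  have h := (hasSum_geometric_of_lt_one (sub_nonneg.mpr h1) (sub_lt_self 1 h0)).mul_left
    (ϱ * (1 - ϱ) ^ l)
  have total : ϱ * (1 - ϱ) ^ l * (1 - (1 - ϱ))⁻¹ = (1 - ϱ) ^ l := by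
    rw [sub_sub_self]
    field_simp
  rw [total] at h
  exact h.congr_fun fun k => by ring

lemma geometric_tail_mul_le_tsum {f : ℕ → ℝ≥0∞} (hf : Monotone f) {ϱ : ℝ} (h0 : 0 < ϱ)
    (h1 : ϱ ≤ 1) (l : ℕ) :
    ENNReal.ofReal ((1 - ϱ) ^ l) * f l ≤ ∑' k : ℕ, ENNReal.ofReal (ϱ * (1 - ϱ) ^ k) * f k := by
  have weight_nonneg (k : ℕ) : 0 ≤ ϱ * (1 - ϱ) ^ (k + l) :=
    mul_nonneg h0.le (pow_nonneg (sub_nonneg.mpr h1) _)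
  have tail := hasSum_geometric_tail h0 h1 l
  calc ENNReal.ofReal ((1 - ϱ) ^ l) * f l
      = ∑' k : ℕ, ENNReal.ofReal (ϱ * (1 - ϱ) ^ (k + l)) * f l := by
        rw [← tail.tsum_eq, ENNReal.ofReal_tsum_of_nonneg weight_nonneg tail.summable,
          ENNReal.tsum_mul_right]
    _ ≤ ∑' k : ℕ, ENNReal.ofReal (ϱ * (1 - ϱ) ^ (k + l)) * f (k + l) := by
        gcongr with k
        exact hf (Nat.le_add_left l k)
    _ ≤ ∑' k : ℕ, ENNReal.ofReal (ϱ * (1 - ϱ) ^ k) * f k :=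
        ENNReal.tsum_comp_le_tsum_of_injective (add_left_injective l) _

/-- The number `⌊b |log α|⌋` of observations after the change within which, for `b < 1/I`, no
procedure of false-alarm level `α` can detect the change with non-vanishing probability. -/
def horizon (b α : ℝ) : ℕ := ⌊b * |Real.log α|⌋₊

lemma tendsto_abs_log_nhdsGT_zero :
    Tendsto (fun α : ℝ => |Real.log α|) (𝓝[>] 0) atTop :=
  tendsto_abs_atBot_atTop.comp Real.tendsto_log_nhdsGT_zero

lemma tendsto_horizon_atTop {b : ℝ} (hb : 0 < b) : Tendsto (horizon b) (𝓝[>] 0) atTop :=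
  tendsto_nat_floor_atTop.comp (tendsto_abs_log_nhdsGT_zero.const_mul_atTop hb)

lemma tendsto_horizon_div_abs_log {b : ℝ} (hb : 0 ≤ b) :
    Tendsto (fun α => (horizon b α : ℝ≥0∞) / ENNReal.ofReal |Real.log α|) (𝓝[>] 0)
      (𝓝 (ENNReal.ofReal b)) := by
  refine (ENNReal.tendsto_ofReal
    ((tendsto_nat_floor_mul_div_atTop hb).comp tendsto_abs_log_nhdsGT_zero)).congr' ?_
  filter_upwards [tendsto_abs_log_nhdsGT_zero.eventually_gt_atTop 0] with α hα
  rw [Function.comp_apply, ENNReal.ofReal_div_of_pos hα, ENNReal.ofReal_natCast, horizon]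

lemma tendsto_neg_log_one_sub {β : Type*} {l : Filter β} {ϱ : β → ℝ} (hϱ : Tendsto ϱ l (𝓝 0)) :
    Tendsto (fun x => -Real.log (1 - ϱ x)) l (𝓝 0) := by
  simpa using ((hϱ.const_sub 1).log (by norm_num)).neg

/-- The bound `e^{N J} α (1-ϱ)^{-(ν+N)}` on the contribution to `P_ν(τ ≤ ν+N)` of the event that
the log-likelihood ratio stays below `N J`, for `τ ∈ Δ(α,ϱ)`. -/
def lowLikelihoodBound (ν N : ℕ) (J α ϱ : ℝ) : ℝ :=
  Real.exp (N * J) * (α / (1 - ϱ) ^ (ν + N))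

lemma lowLikelihoodBound_eq_exp {α ϱ : ℝ} (hα : 0 < α) (hϱ : ϱ < 1) (ν N : ℕ) (J : ℝ) :
    lowLikelihoodBound ν N J α ϱ =
      Real.exp (N * (J + -Real.log (1 - ϱ)) + Real.log α + ν * -Real.log (1 - ϱ)) := by
  have hpow : 0 < (1 - ϱ) ^ (ν + N) := pow_pos (sub_pos.mpr hϱ) _
  rw [lowLikelihoodBound, ← Real.exp_log (div_pos hα hpow), ← Real.exp_add,
    Real.log_div hα.ne' hpow.ne', Real.log_pow]
  push_cast
  ring_nf

lemma tendsto_lowLikelihoodBound_horizon {b J : ℝ} (hb : 0 ≤ b) (hJ : 0 < J) (hbJ : b * J < 1)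
    {ϱ : ℝ → ℝ} (hϱ : Tendsto ϱ (𝓝[>] 0) (𝓝 0)) (ν : ℕ) :
    Tendsto (fun α => lowLikelihoodBound ν (horizon b α) J α (ϱ α)) (𝓝[>] 0) (𝓝 0) := by
  set r : ℝ → ℝ := fun α => -Real.log (1 - ϱ α)
  have hr : Tendsto r (𝓝[>] 0) (𝓝 0) := tendsto_neg_log_one_sub hϱ
  have slope : Tendsto (fun α => b * (J + r α) - 1) (𝓝[>] 0) (𝓝 (b * J - 1)) := by
    simpa using ((hr.const_add J).const_mul b).sub_const 1
  have majorant :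
      Tendsto (fun α => |Real.log α| * (b * (J + r α) - 1) + ν * r α) (𝓝[>] 0) atBot :=
    (tendsto_abs_log_nhdsGT_zero.atTop_mul_neg (by linarith) slope).atBot_add
      (hr.const_mul (ν : ℝ))
  have exponent : Tendsto
      (fun α => horizon b α * (J + r α) + Real.log α + ν * r α) (𝓝[>] 0) atBot := by
    refine tendsto_atBot_mono' _ ?_ majorant
    filter_upwards [Ioo_mem_nhdsGT one_pos, (hr.const_add J).eventually_const_lt (by simpa)]
      with α hα hJr
    have hfloor : (horizon b α : ℝ) ≤ b * |Real.log α| := Nat.floor_le (by positivity)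
    have hlog : Real.log α = -|Real.log α| := by rw [abs_of_neg (Real.log_neg hα.1 hα.2), neg_neg]
    linarith [mul_le_mul_of_nonneg_right hfloor hJr.le]
  refine (Real.tendsto_exp_atBot.comp exponent).congr' ?_
  filter_upwards [self_mem_nhdsWithin, hϱ.eventually_lt_const one_pos] with α hα hϱα
  exact (lowLikelihoodBound_eq_exp hα hϱα ν _ J).symm

namespace ChangePointModel

variable {Ω : Type} [MeasurableSpace Ω] (M : ChangePointModel Ω)

lemma trim_P_absolutelyContinuous (k n : ℕ) :
    (M.P k).trim (M.F_le n) ≪ M.Pinf.trim (M.F_le n) := by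
  rcases le_or_gt n k with hnk | hkn
  · rw [M.agree k n hnk]
  · exact M.ac₁ k n hkn

lemma measurable_Z (n k : ℕ) : Measurable[M.F n] (M.Z n k) :=
  measurable_llr ((M.P k).trim (M.F_le n)) (M.Pinf.trim (M.F_le n))

lemma P_le_P_lt_Z_add {k n : ℕ} {A : Set Ω} (hA : MeasurableSet[M.F n] A) (a : ℝ) :
    M.P k A ≤ M.P k {ω | a < M.Z n k ω} + ENNReal.ofReal (Real.exp a) * M.Pinf A := by
  have := M.P_prob k
  have := M.Pinf_prob
  have hZ : MeasurableSet[M.F n] {ω | a < M.Z n k ω} := M.measurable_Z n k measurableSet_Ioi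
  rw [← trim_measurableSet_eq (M.F_le n) hA, ← trim_measurableSet_eq (M.F_le n) hA,
    ← trim_measurableSet_eq (M.F_le n) hZ]
  exact measure_le_measure_lt_llr_add (M.trim_P_absolutelyContinuous k n) A a

lemma risk_le_crisk (ν : ℕ) (τ : Ω → ℕ∞) : M.risk ν τ ≤ M.crisk ν τ := by
  have := M.P_prob ν
  calc M.risk ν τ = M.risk ν τ / 1 := (div_one _).symm
    _ ≤ M.crisk ν τ := ENNReal.div_le_div_left prob_le_one _

/-- The one-sided, in-probability weakening of condition (A1) at a single change point `ν`: under
`P ν`, the log-likelihood ratio asymptotically grows at rate at most `I`. -/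
def LLRRateLE (ν : ℕ) (I : ℝ) : Prop :=
  ∀ J, I < J → Tendsto (fun n : ℕ => M.P ν {ω | n * J < M.Z (ν + n) ν ω}) atTop (𝓝 0)

variable {M}

lemma CondA1.llrRateLE {I : ℝ} (hA1 : M.CondA1 I) (ν : ℕ) : M.LLRRateLE ν I := by
  intro J hJ
  have := M.P_prob ν
  have meas (n : ℕ) : AEStronglyMeasurable (fun ω => M.Z (ν + n) ν ω / n) (M.P ν) :=
    (((M.measurable_Z _ ν).mono (M.F_le _) le_rfl).div_const _).aestronglyMeasurable
  refine (tendsto_measure_lt_of_tendstoInMeasure_const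
    (tendstoInMeasure_of_tendsto_ae meas (hA1 ν)) hJ).congr' ?_
  filter_upwards [eventually_gt_atTop 0] with n hn
  have hn' : (0 : ℝ) < n := Nat.cast_pos.mpr hn
  simp only [lt_div_iff₀ hn', mul_comm J]

lemma natCast_mul_le_risk {τ : Ω → ℕ∞} (hτ : M.IsDetection τ) (ν N : ℕ) :
    N * (1 - M.P ν {ω | τ ω ≤ (ν + N : ℕ)}) ≤ M.risk ν τ := by
  have := M.P_prob ν
  have hA : MeasurableSet {ω | τ ω ≤ (ν + N : ℕ)} := M.F_le _ _ (hτ.2 _)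
  rw [← prob_compl_eq_one_sub hA, ← setLIntegral_const]
  refine (setLIntegral_mono' hA.compl fun ω hω => ?_).trans (setLIntegral_le_lintegral _ _)
  have hlt : ((ν + N : ℕ) : ℕ∞) < τ ω := not_le.mp hω
  have delay : (N : ℕ∞) ≤ τ ω - ν :=
    ENat.le_sub_of_add_le_left (ENat.natCast_ne_top ν) (by exact_mod_cast hlt.le)
  exact_mod_cast ENat.toENNReal_le.mpr delay

lemma Pinf_le_of_mem_Delta {α ϱ : ℝ} (h0 : 0 < ϱ) (h1 : ϱ < 1) {τ : Ω → ℕ∞}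
    (hτ : τ ∈ M.Delta α ϱ) (l : ℕ) :
    M.Pinf {ω | τ ω ≤ l} ≤ ENNReal.ofReal (α / (1 - ϱ) ^ l) := by
  have hpow : 0 < (1 - ϱ) ^ l := pow_pos (sub_pos.mpr h1) l
  have mono : Monotone fun k : ℕ => M.Pinf {ω | τ ω ≤ k} := fun i j hij =>
    measure_mono fun ω (hω : τ ω ≤ i) => hω.trans (Nat.cast_le.mpr hij)
  rw [ENNReal.ofReal_div_of_pos hpow,
    ENNReal.le_div_iff_mul_le (.inl (by simpa using hpow)) (.inl ENNReal.ofReal_ne_top), mul_comm]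
  exact (geometric_tail_mul_le_tsum mono h0 h1.le l).trans hτ.2

lemma P_le_of_mem_Delta {α ϱ : ℝ} (h0 : 0 < ϱ) (h1 : ϱ < 1) {τ : Ω → ℕ∞}
    (hτ : τ ∈ M.Delta α ϱ) (ν N : ℕ) (J : ℝ) :
    M.P ν {ω | τ ω ≤ (ν + N : ℕ)} ≤ M.P ν {ω | N * J < M.Z (ν + N) ν ω} +
      ENNReal.ofReal (lowLikelihoodBound ν N J α ϱ) := by
  refine (M.P_le_P_lt_Z_add (hτ.1.2 _) (N * J)).trans ?_
  rw [lowLikelihoodBound, ENNReal.ofReal_mul (Real.exp_pos _).le]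
  gcongr
  exact Pinf_le_of_mem_Delta h0 h1 hτ (ν + N)

lemma natCast_mul_le_iInf_risk {α ϱ : ℝ} (h0 : 0 < ϱ) (h1 : ϱ < 1) (ν N : ℕ) (J : ℝ) :
    N * (1 - (M.P ν {ω | N * J < M.Z (ν + N) ν ω} +
      ENNReal.ofReal (lowLikelihoodBound ν N J α ϱ))) ≤ ⨅ τ ∈ M.Delta α ϱ, M.risk ν τ := by
  refine le_iInf₂ fun τ hτ => le_trans ?_ (natCast_mul_le_risk hτ.1 ν N)
  gcongr
  exact P_le_of_mem_Delta h0 h1 hτ ν N J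

lemma LLRRateLE.ofReal_le_liminf_iInf_risk_div_abs_log {I : ℝ} {ν : ℕ} (hrate : M.LLRRateLE ν I)
    (hI : 0 < I) {ϱ : ℝ → ℝ} (hϱpos : ∀ᶠ α in 𝓝[>] 0, 0 < ϱ α)
    (hϱ0 : Tendsto ϱ (𝓝[>] 0) (𝓝 0)) {b : ℝ} (hb : 0 < b) (hbI : b < 1 / I) :
    ENNReal.ofReal b ≤ liminf (fun α =>
      (⨅ τ ∈ M.Delta α (ϱ α), M.risk ν τ) / ENNReal.ofReal |Real.log α|) (𝓝[>] 0) := by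
  obtain ⟨J, hIJ, hJb⟩ : ∃ J, I < J ∧ J < 1 / b := exists_between ((lt_one_div hb hI).mp hbI)
  have hbJ : b * J < 1 := by rwa [mul_comm, ← lt_div_iff₀ hb]
  have large_llr := (hrate J hIJ).comp (tendsto_horizon_atTop hb)
  have small_llr := ENNReal.tendsto_ofReal
    (tendsto_lowLikelihoodBound_horizon hb.le (hI.trans hIJ) hbJ hϱ0 ν)
  have miss : Tendsto (fun α => 1 -
      (M.P ν {ω | horizon b α * J < M.Z (ν + horizon b α) ν ω} +
        ENNReal.ofReal (lowLikelihoodBound ν (horizon b α) J α (ϱ α)))) (𝓝[>] 0) (𝓝 1) := by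
    simpa using ENNReal.Tendsto.sub tendsto_const_nhds (large_llr.add small_llr) (.inl one_ne_top)
  have lower := ENNReal.Tendsto.mul (tendsto_horizon_div_abs_log hb.le)
    (.inr one_ne_top) miss (.inl one_ne_zero)
  rw [mul_one] at lower
  refine lower.liminf_eq.symm.trans_le (liminf_le_liminf ?_)
  filter_upwards [hϱpos, hϱ0.eventually_lt_const one_pos] with α h0 h1
  rw [div_eq_mul_inv, mul_right_comm, ← div_eq_mul_inv]
  gcongr
  exact natCast_mul_le_iInf_risk h0 h1 ν (horizon b α) J

end ChangePointModel

theorem statement0_general {Ω : Type} [MeasurableSpace Ω] {M : ChangePointModel Ω} {I : ℝ}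
    (hI : 0 < I) {ν : ℕ} (hrate : M.LLRRateLE ν I) {ϱ : ℝ → ℝ}
    (hϱpos : ∀ᶠ α in 𝓝[>] 0, 0 < ϱ α) (hϱ0 : Tendsto ϱ (𝓝[>] 0) (𝓝 0))
    {Φ : (Ω → ℕ∞) → ℝ≥0∞} (hΦ : ∀ τ, M.risk ν τ ≤ Φ τ) :
    ENNReal.ofReal (1 / I) ≤ liminf (fun α =>
      (⨅ τ ∈ M.Delta α (ϱ α), Φ τ) / ENNReal.ofReal |Real.log α|) (𝓝[>] 0) := by
  have risk_bound : ENNReal.ofReal (1 / I) ≤ liminf (fun α =>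
      (⨅ τ ∈ M.Delta α (ϱ α), M.risk ν τ) / ENNReal.ofReal |Real.log α|) (𝓝[>] 0) := by
    refine le_of_tendsto (ENNReal.tendsto_ofReal (tendsto_id'.mpr nhdsWithin_le_nhds))
      (x := 𝓝[<] (1 / I)) ?_
    filter_upwards [Ioo_mem_nhdsLT (one_div_pos.mpr hI)] with b hb
    exact hrate.ofReal_le_liminf_iInf_risk_div_abs_log hI hϱpos hϱ0 hb.1 hb.2
  refine risk_bound.trans (liminf_le_liminf (.of_forall fun α => ?_))
  gcongr with τ
  exact hΦ τ

/-- Under condition (A1) with limit `I ∈ (0,∞)` and `ϱ_α → 0`,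
the asymptotic lower bounds `liminf_{α→0} (1/|log α|)·inf_{τ∈Δ(α,ϱ_α)} R_ν(τ) ≥ 1/I`
and `liminf_{α→0} (1/|log α|)·inf_{τ∈Δ(α,ϱ_α)} R*_ν(τ) ≥ 1/I` hold for every `ν ≥ 0`,
and consequently also for the suprema over `ν` of the risks. -/
theorem statement0
    {Ω : Type} [m0 : MeasurableSpace Ω] (M : ChangePointModel Ω)
    (I : ℝ) (hI : 0 < I) (hA1 : M.CondA1 I)
    (ϱ : ℝ → ℝ) (hϱmem : ∀ α ∈ Set.Ioo (0 : ℝ) 1, ϱ α ∈ Set.Ioo (0 : ℝ) 1)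
    (hϱ0 : Tendsto ϱ (𝓝[>] (0 : ℝ)) (𝓝 0)) :
    (∀ ν : ℕ,
      ENNReal.ofReal (1 / I) ≤
        Filter.liminf (fun α : ℝ =>
          (⨅ τ ∈ M.Delta α (ϱ α), M.risk ν τ) / ENNReal.ofReal |Real.log α|)
          (𝓝[>] (0 : ℝ))) ∧
    (∀ ν : ℕ,
      ENNReal.ofReal (1 / I) ≤
        Filter.liminf (fun α : ℝ =>
          (⨅ τ ∈ M.Delta α (ϱ α), M.crisk ν τ) / ENNReal.ofReal |Real.log α|)
          (𝓝[>] (0 : ℝ))) ∧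
    (ENNReal.ofReal (1 / I) ≤
        Filter.liminf (fun α : ℝ =>
          (⨅ τ ∈ M.Delta α (ϱ α), ⨆ ν : ℕ, M.risk ν τ) / ENNReal.ofReal |Real.log α|)
          (𝓝[>] (0 : ℝ))) ∧
    (ENNReal.ofReal (1 / I) ≤
        Filter.liminf (fun α : ℝ =>
          (⨅ τ ∈ M.Delta α (ϱ α), ⨆ ν : ℕ, M.crisk ν τ) / ENNReal.ofReal |Real.log α|)
          (𝓝[>] (0 : ℝ))) := by
  have hϱpos : ∀ᶠ α in 𝓝[>] 0, 0 < ϱ α := by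
    filter_upwards [Ioo_mem_nhdsGT one_pos] with α hα using (hϱmem α hα).1
  have lower (ν : ℕ) {Φ : (Ω → ℕ∞) → ℝ≥0∞} (hΦ : ∀ τ, M.risk ν τ ≤ Φ τ) :=
    statement0_general hI (hA1.llrRateLE ν) hϱpos hϱ0 hΦ
  exact ⟨fun ν => lower ν fun _ => le_rfl,
    fun ν => lower ν (M.risk_le_crisk ν),
    lower 0 fun τ => le_iSup (fun ν => M.risk ν τ) 0,
    lower 0 fun τ => (M.risk_le_crisk 0 τ).trans (le_iSup (fun ν => M.crisk ν τ) 0)⟩
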